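/- Let q be a power of a prime p and let k, f be positive integers with f | k and f > 1. Let χ, χ₁, χ₂ be the canonical additive characters of F_q, F_{q^f}, F_{q^k}, respectively, and for b ∈ F_{q^k} set Ω(b) = Σ_{x ∈ F_{q^k}} Σ_{y ∈ F_q^*} χ₁(y·x^{(q^k-1)/(q^f-1)}) χ₂(bx) and Δ(b) = Σ_{z ∈ F_q^*} Ω(bz). Let φ be a multiplicative character of F_{q^f}^* of order (q^f-1)/(q-1). Then for every b ∈ F_{q^k}^*: Δ(b) = q^f(q-1)²/(q^f-1) + ((-1)^{k/f-1} q^f (q-1)²/(q^f-1)) · Σ_{j=1}^{(q^f-1)/(q-1) - 1} φ^j(-1) G(φ^j, χ₁)^{k/f - 1} conj(φ^j)(b^{(q^k-1)/(q^f-1)}). -/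

import Mathlib

open scoped BigOperators

/- The elements of `Kˣ` are exactly the `s ∈ Fˣ` with `φ s = 1`, so the average of the powers of `φ`
is the indicator of `Kˣ` in `F`, and the inner sum of `Ω(c)` becomes a combination of Gauss sums
of the `φ ^ j`. The remaining sum over `E` is a Gauss sum of a character lifted along the norm,
which the Hasse–Davenport theorem expresses through the Gauss sum over `F`. Moreover `Ω` is
invariant under scaling by `Kˣ`, because the norm of `z ∈ Kˣ` is again in `Kˣ`.

For Hasse–Davenport, give a monic polynomial with roots `αᵢ` the weight `ψ(∏ αᵢ) χ(∑ αᵢ)`. It is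
multiplicative, and its sum over the monic polynomials of degree `n ≥ 2` vanishes, so its
`L`-function is `1 + G(ψ, χ) T`. The logarithmic derivative of the Euler product then evaluates the
von Mangoldt sum over degree `[E : F]`, and this is the Gauss sum over `E` because a prime power
`P ^ k` of that degree is the characteristic polynomial of exactly `deg P` elements of `E`. -/

section MonicPolynomials

open Polynomial UniqueFactorizationMonoid
open Finset.HasAntidiagonal (antidiagonal)

theorem finite_setOf_monic_natDegree_eq (F : Type*) [Field F] [Finite F] (n : ℕ) :
    {f : F[X] | f.Monic ∧ f.natDegree = n}.Finite :=
  Finite.of_equiv (Fin n → F)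
    ((degreeLTEquiv F n).toEquiv.symm.trans (monicEquivDegreeLT n).symm)

/-- The finite set of monic polynomials of degree `n` over a finite field. -/
noncomputable def monicOfDegree (F : Type*) [Field F] [Finite F] (n : ℕ) : Finset F[X] :=
  (finite_setOf_monic_natDegree_eq F n).toFinset

variable {F : Type*} [Field F]

theorem mem_monicOfDegree [Finite F] {n : ℕ} {f : F[X]} :
    f ∈ monicOfDegree F n ↔ f.Monic ∧ f.natDegree = n := by
  simp only [monicOfDegree, Set.Finite.mem_toFinset, Set.mem_ofPred_eq]

theorem monicOfDegree_zero [Finite F] : monicOfDegree F 0 = {1} := by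
  ext f
  rw [mem_monicOfDegree, Finset.mem_singleton]
  exact ⟨fun h => h.1.natDegree_eq_zero.mp h.2, by rintro rfl; simp⟩

open Classical in
/-- The monic divisors of a nonzero polynomial over a field; by convention `∅` for the zero
polynomial. -/
noncomputable def monicDivisors (f : F[X]) : Finset F[X] :=
  if hf : f = 0 then ∅ else
    letI := fintypeSubtypeMonicDvd f hf
    Finset.univ.map (Function.Embedding.subtype fun g : F[X] => g.Monic ∧ g ∣ f)

theorem mem_monicDivisors {f g : F[X]} (hf : f ≠ 0) :
    g ∈ monicDivisors f ↔ g.Monic ∧ g ∣ f := by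
  simp [monicDivisors, hf]

theorem sum_monicOfDegree_sum_monicDivisors [Finite F] {R : Type*} [AddCommMonoid R]
    (Φ : F[X] → F[X] → R) (n : ℕ) :
    ∑ f ∈ monicOfDegree F n, ∑ g ∈ monicDivisors f, Φ g f =
      ∑ d ∈ antidiagonal n, ∑ g ∈ monicOfDegree F d.1, ∑ h ∈ monicOfDegree F d.2, Φ g (g * h) := by
  have mul_divByMonic (f g : F[X]) (hfg : f ∈ monicOfDegree F n ∧ g ∈ monicDivisors f) :
      g * (f /ₘ g) = f := by
    obtain ⟨hg, h, rfl⟩ :=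
      (mem_monicDivisors (mem_monicOfDegree.mp hfg.1).1.ne_zero).mp hfg.2
    rw [mul_divByMonic_cancel_left h hg]
  simp_rw [Finset.sum_sigma']
  refine Finset.sum_bij' (fun a _ => ⟨(a.2.natDegree, (a.1 /ₘ a.2).natDegree), a.2, a.1 /ₘ a.2⟩)
    (fun c _ => ⟨c.2.1 * c.2.2, c.2.1⟩) ?_ ?_ ?_ ?_ ?_
  · rintro ⟨f, g⟩ hfg
    simp only [Finset.mem_sigma, mem_monicOfDegree] at hfg
    obtain ⟨⟨hf, rfl⟩, hgf⟩ := hfg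
    obtain ⟨hg, h, rfl⟩ := (mem_monicDivisors hf.ne_zero).mp hgf
    have hh := hg.of_mul_monic_left hf
    simp [mem_monicOfDegree, mul_divByMonic_cancel_left h hg, hg, hh, hg.natDegree_mul hh]
  · rintro ⟨⟨i, j⟩, g, h⟩ hgh
    simp only [Finset.mem_sigma, mem_monicOfDegree, Finset.HasAntidiagonal.mem_antidiagonal] at hgh
    obtain ⟨rfl, ⟨hg, rfl⟩, hh, rfl⟩ := hgh
    simp [mem_monicOfDegree, mem_monicDivisors (hg.mul hh).ne_zero, hg.mul hh, hg.natDegree_mul hh,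
      hg]
  · rintro ⟨f, g⟩ hfg
    exact Sigma.ext (mul_divByMonic f g (Finset.mem_sigma.mp hfg)) HEq.rfl
  · rintro ⟨⟨i, j⟩, g, h⟩ hgh
    simp only [Finset.mem_sigma, mem_monicOfDegree, Finset.HasAntidiagonal.mem_antidiagonal] at hgh
    obtain ⟨-, ⟨hg, rfl⟩, -, rfl⟩ := hgh
    simp [mul_divByMonic_cancel_left h hg]
  · rintro ⟨f, g⟩ hfg
    rw [mul_divByMonic f g (Finset.mem_sigma.mp hfg)]

open Classical in
/-- The von Mangoldt function of `F[X]`: `deg P` at a power of an irreducible polynomial `P`,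
and `0` elsewhere. -/
noncomputable def polyVonMangoldt (f : F[X]) : ℕ :=
  if IsPrimePow f then (radical f).natDegree else 0

theorem polyVonMangoldt_one : polyVonMangoldt (1 : F[X]) = 0 :=
  if_neg not_isPrimePow_one

theorem radical_pow_of_monic_irreducible [DecidableEq F] {P : F[X]} (hP : P.Monic)
    (hirr : Irreducible P) {k : ℕ} (hk : k ≠ 0) : radical (P ^ k) = P := by
  rw [radical_pow_of_prime hirr.prime hk, hP.normalize_eq_self]

theorem exists_monic_irreducible_pow_eq {f : F[X]} (hf : f.Monic) (h : IsPrimePow f) :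
    ∃ (P : F[X]) (k : ℕ), P.Monic ∧ Irreducible P ∧ k ≠ 0 ∧ P ^ k = f := by
  classical
  obtain ⟨P, k, hP, hk, rfl⟩ := (isPrimePow_def f).mp h
  have hmonic : (normalize P).Monic := monic_normalize hP.ne_zero
  exact ⟨normalize P, k, hmonic, (associated_normalize P).irreducible hP.irreducible, hk.ne',
    eq_of_monic_of_associated (hmonic.pow k) hf ((normalize_associated P).pow_pow)⟩

theorem polyVonMangoldt_pow {P : F[X]} (hP : P.Monic)
    (hirr : Irreducible P) {k : ℕ} (hk : k ≠ 0) : polyVonMangoldt (P ^ k) = P.natDegree := by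
  classical
  rw [polyVonMangoldt, if_pos (hirr.prime.isPrimePow.pow hk),
    radical_pow_of_monic_irreducible hP hirr hk]

open Classical in
theorem card_filter_monicDivisors_radical_eq {f P : F[X]} (hf : f ≠ 0) (hP : P.Monic)
    (hirr : Irreducible P) :
    {g ∈ monicDivisors f | IsPrimePow g ∧ radical g = P}.card = (normalizedFactors f).count P := by
  have pow_dvd_iff (k : ℕ) : P ^ k ∣ f ↔ k ≤ (normalizedFactors f).count P := by
    rw [pow_dvd_iff_le_emultiplicity, emultiplicity_eq_count_normalizedFactors hirr hf,
      hP.normalize_eq_self, Nat.cast_le]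
  have fiber_eq : {g ∈ monicDivisors f | IsPrimePow g ∧ radical g = P} =
      (Finset.Icc 1 ((normalizedFactors f).count P)).image (P ^ ·) := by
    ext g
    simp only [Finset.mem_filter, mem_monicDivisors hf, Finset.mem_image, Finset.mem_Icc]
    constructor
    · rintro ⟨⟨hg, hgf⟩, hpow, rfl⟩
      obtain ⟨Q, k, hQ, hQirr, hk, rfl⟩ := exists_monic_irreducible_pow_eq hg hpow
      rw [radical_pow_of_monic_irreducible hQ hQirr hk] at pow_dvd_iff ⊢
      exact ⟨k, ⟨Nat.one_le_iff_ne_zero.mpr hk, (pow_dvd_iff k).mp hgf⟩, rfl⟩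
    · rintro ⟨k, ⟨hk, hkf⟩, rfl⟩
      have hk0 := Nat.one_le_iff_ne_zero.mp hk
      exact ⟨⟨hP.pow k, (pow_dvd_iff k).mpr hkf⟩, hirr.prime.isPrimePow.pow hk0,
        radical_pow_of_monic_irreducible hP hirr hk0⟩
  rw [fiber_eq, Finset.card_image_of_injective _
    (pow_injective_of_not_isUnit hirr.not_isUnit hirr.ne_zero), Nat.card_Icc, Nat.add_sub_cancel]

open Classical in
theorem natDegree_eq_sum_primeFactors {f : F[X]} (hf : f ≠ 0) :
    f.natDegree = ∑ P ∈ primeFactors f, (normalizedFactors f).count P * P.natDegree := by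
  have hmonic : ∀ P ∈ normalizedFactors f, P.Monic := fun P hP => by
    rw [← normalize_normalized_factor P hP]
    exact monic_normalize (irreducible_of_normalized_factor P hP).ne_zero
  rw [← natDegree_eq_of_degree_eq (degree_eq_degree_of_associated (prod_normalizedFactors hf)),
    natDegree_multiset_prod_of_monic _ hmonic, Finset.sum_multiset_map_count]
  simp only [smul_eq_mul, toFinset_normalizedFactors]

theorem sum_monicDivisors_polyVonMangoldt {f : F[X]} (hf : f ≠ 0) :
    ∑ g ∈ monicDivisors f, polyVonMangoldt g = f.natDegree := by
  classical
  have radical_mem : ∀ g ∈ {g ∈ monicDivisors f | IsPrimePow g}, radical g ∈ primeFactors f := by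
    intro g hg
    obtain ⟨hgf, hpow⟩ := Finset.mem_filter.mp hg
    obtain ⟨hg, hgf⟩ := (mem_monicDivisors hf).mp hgf
    obtain ⟨P, k, hP, hirr, hk, rfl⟩ := exists_monic_irreducible_pow_eq hg hpow
    rw [radical_pow_of_monic_irreducible hP hirr hk, mem_primeFactors,
      mem_normalizedFactors_iff' hf]
    exact ⟨hirr, hP.normalize_eq_self, (dvd_pow_self P hk).trans hgf⟩
  simp only [polyVonMangoldt]
  rw [← Finset.sum_filter, ← Finset.sum_fiberwise_of_maps_to radical_mem,
    natDegree_eq_sum_primeFactors hf]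
  refine Finset.sum_congr rfl fun P hP => ?_
  obtain ⟨hirr, hnorm, -⟩ := (mem_normalizedFactors_iff' hf).mp (mem_primeFactors.mp hP)
  have hPm : P.Monic := hnorm ▸ monic_normalize hirr.ne_zero
  rw [← card_filter_monicDivisors_radical_eq hf hPm hirr, Finset.filter_filter,
    ← smul_eq_mul, ← Finset.sum_const]
  exact Finset.sum_congr rfl fun g hg => by rw [(Finset.mem_filter.mp hg).2.2]

end MonicPolynomials

section DegreeSums

open Polynomial
open Finset.HasAntidiagonal (antidiagonal)

variable {F R : Type*} [Field F] [CommRing R]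

/-- The sum of a weight `w` over the monic polynomials of degree `n`, i.e. the coefficient of `tⁿ`
in the generating series `∑ w(f) t ^ deg f` over all monic `f`. -/
noncomputable def degreeSum [Finite F] (w : F[X] → R) (n : ℕ) : R :=
  ∑ f ∈ monicOfDegree F n, w f

/-- For multiplicative `w` this is the logarithmic derivative of the Euler product of
`∑ w(f) t ^ deg f`, read off coefficientwise. -/
theorem natCast_mul_degreeSum [Finite F] {w : F[X] → R}
    (hw : ∀ f g : F[X], f.Monic → g.Monic → w (f * g) = w f * w g) (n : ℕ) :
    n * degreeSum w n = ∑ d ∈ antidiagonal n,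
      degreeSum (fun f => polyVonMangoldt f * w f) d.1 * degreeSum w d.2 := by
  calc n * degreeSum w n
      = ∑ f ∈ monicOfDegree F n, ∑ g ∈ monicDivisors f, polyVonMangoldt g * w f := by
        rw [degreeSum, Finset.mul_sum]
        refine Finset.sum_congr rfl fun f hf => ?_
        obtain ⟨hmonic, rfl⟩ := mem_monicOfDegree.mp hf
        rw [← Finset.sum_mul, ← Nat.cast_sum, sum_monicDivisors_polyVonMangoldt hmonic.ne_zero]
    _ = ∑ d ∈ antidiagonal n, ∑ g ∈ monicOfDegree F d.1, ∑ h ∈ monicOfDegree F d.2,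
          polyVonMangoldt g * w (g * h) :=
        sum_monicOfDegree_sum_monicDivisors (fun g f => polyVonMangoldt g * w f) n
    _ = _ := by
        refine Finset.sum_congr rfl fun d _ => ?_
        rw [degreeSum, degreeSum, Finset.sum_mul_sum]
        refine Finset.sum_congr rfl fun g hg => Finset.sum_congr rfl fun h hh => ?_
        rw [hw g h (mem_monicOfDegree.mp hg).1 (mem_monicOfDegree.mp hh).1, mul_assoc]

theorem degreeSum_zero [Finite F] (w : F[X] → R) : degreeSum w 0 = w 1 := by
  rw [degreeSum, monicOfDegree_zero, Finset.sum_singleton]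

theorem degreeSum_one [Fintype F] (w : F[X] → R) : degreeSum w 1 = ∑ a : F, w (X - C a) := by
  refine (Finset.sum_bij (fun a _ => X - C a) ?_ ?_ ?_ fun _ _ => rfl).symm
  · exact fun a _ => mem_monicOfDegree.mpr ⟨monic_X_sub_C a, natDegree_X_sub_C a⟩
  · exact fun a _ b _ h => C_injective (sub_right_injective h)
  · intro f hf
    obtain ⟨hf, hdeg⟩ := mem_monicOfDegree.mp hf
    refine ⟨-f.coeff 0, Finset.mem_univ _, ?_⟩
    rw [C_neg, sub_neg_eq_add, ← hf.eq_X_add_C hdeg]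

theorem add_C_mul_X_pow_mem_monicOfDegree [Finite F] {n : ℕ} {f : F[X]} (a : F)
    (hf : f ∈ monicOfDegree F (n + 1)) : f + C a * X ^ n ∈ monicOfDegree F (n + 1) := by
  obtain ⟨hf, hdeg⟩ := mem_monicOfDegree.mp hf
  have hlt : (C a * X ^ n).degree < f.degree := by
    refine (degree_C_mul_X_pow_le n a).trans_lt ?_
    rw [degree_eq_natDegree hf.ne_zero, hdeg]
    exact_mod_cast n.lt_succ_self
  exact mem_monicOfDegree.mpr
    ⟨hf.add_of_left hlt, by rw [natDegree_add_eq_left_of_degree_lt hlt, hdeg]⟩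

theorem degreeSum_add_C_mul_X_pow [Finite F] (w : F[X] → R) (n : ℕ) (a : F) :
    degreeSum (fun f => w (f + C a * X ^ n)) (n + 1) = degreeSum w (n + 1) :=
  Finset.sum_bij' (fun f _ => f + C a * X ^ n) (fun f _ => f + C (-a) * X ^ n)
    (fun _ => add_C_mul_X_pow_mem_monicOfDegree a) (fun _ => add_C_mul_X_pow_mem_monicOfDegree (-a))
    (fun f _ => by simp) (fun f _ => by simp) fun _ _ => rfl

end DegreeSums

section RootWeight

open Polynomial

variable {F R : Type*} [Field F] [CommRing R] (ψ : MulChar F R) (χ : AddChar F R)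

/-- The weight `ψ(∏ αᵢ) χ(∑ αᵢ)` of a monic polynomial with roots `αᵢ`, written in terms of its
coefficients. -/
noncomputable def rootWeight (f : F[X]) : R :=
  ψ ((-1) ^ f.natDegree * f.coeff 0) * χ (-f.nextCoeff)

theorem rootWeight_one : rootWeight ψ χ 1 = 1 := by
  simp [rootWeight, nextCoeff]

theorem rootWeight_mul {f g : F[X]} (hf : f.Monic) (hg : g.Monic) :
    rootWeight ψ χ (f * g) = rootWeight ψ χ f * rootWeight ψ χ g := by
  rw [rootWeight, hf.natDegree_mul hg, hf.nextCoeff_mul hg, mul_coeff_zero, neg_add,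
    AddChar.map_add_eq_mul, pow_add, mul_mul_mul_comm, map_mul, mul_mul_mul_comm]
  rfl

theorem rootWeight_pow {f : F[X]} (hf : f.Monic) (n : ℕ) :
    rootWeight ψ χ (f ^ n) = rootWeight ψ χ f ^ n := by
  induction n with
  | zero => rw [pow_zero, pow_zero, rootWeight_one]
  | succ n ih => rw [pow_succ, rootWeight_mul ψ χ (hf.pow n) hf, ih, pow_succ]

theorem rootWeight_X_sub_C (a : F) : rootWeight ψ χ (X - C a) = ψ a * χ a := by
  simp [rootWeight, nextCoeff_X_sub_C]

theorem rootWeight_add_C_mul_X_pow [Finite F] {n : ℕ} (a : F) {f : F[X]}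
    (hf : f ∈ monicOfDegree F (n + 2)) :
    rootWeight ψ χ (f + C a * X ^ (n + 1)) = χ (-a) * rootWeight ψ χ f := by
  obtain ⟨-, hdeg'⟩ := mem_monicOfDegree.mp (add_C_mul_X_pow_mem_monicOfDegree a hf)
  obtain ⟨-, hdeg⟩ := mem_monicOfDegree.mp hf
  have coeff_zero_eq : (f + C a * X ^ (n + 1)).coeff 0 = f.coeff 0 := by simp
  have coeff_next_eq : (f + C a * X ^ (n + 1)).coeff (n + 1) = f.coeff (n + 1) + a := by simp
  rw [rootWeight, rootWeight, nextCoeff_of_natDegree_pos (by lia),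
    nextCoeff_of_natDegree_pos (by lia), hdeg, hdeg', coeff_zero_eq, Nat.add_sub_cancel (m := 1),
    coeff_next_eq, neg_add_rev, AddChar.map_add_eq_mul, mul_left_comm]

theorem degreeSum_rootWeight_add_two [Finite F] [IsDomain R] (hχ : χ ≠ 1) (n : ℕ) :
    degreeSum (rootWeight ψ χ) (n + 2) = 0 := by
  obtain ⟨a, ha⟩ := AddChar.ne_one_iff.mp hχ
  have translate := calc
    χ a * degreeSum (rootWeight ψ χ) (n + 2)
      = degreeSum (fun f => rootWeight ψ χ (f + C (-a) * X ^ (n + 1))) (n + 2) := by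
        rw [degreeSum, degreeSum, Finset.mul_sum]
        refine Finset.sum_congr rfl fun f hf => ?_
        rw [rootWeight_add_C_mul_X_pow ψ χ (-a) hf, neg_neg]
    _ = degreeSum (rootWeight ψ χ) (n + 2) := degreeSum_add_C_mul_X_pow _ (n + 1) (-a)
  exact (mul_left_eq_self₀.mp translate).resolve_left ha

theorem degreeSum_polyVonMangoldt_mul_rootWeight [Fintype F] [IsDomain R] (hχ : χ ≠ 1) (n : ℕ) :
    degreeSum (fun f => polyVonMangoldt f * rootWeight ψ χ f) (n + 1) =
      (-1) ^ n * gaussSum ψ χ ^ (n + 1) := by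
  have h0 : degreeSum (rootWeight ψ χ) 0 = 1 := by rw [degreeSum_zero, rootWeight_one]
  have h1 : degreeSum (rootWeight ψ χ) 1 = gaussSum ψ χ := by
    simp only [degreeSum_one, rootWeight_X_sub_C, gaussSum]
  have hΛ0 : degreeSum (fun f => polyVonMangoldt f * rootWeight ψ χ f) 0 = 0 := by
    rw [degreeSum_zero, polyVonMangoldt_one, Nat.cast_zero, zero_mul]
  have newton := natCast_mul_degreeSum fun _ _ => rootWeight_mul ψ χ
  induction n with
  | zero =>
    simpa [Finset.Nat.antidiagonal_succ, h0, h1, hΛ0] using (newton 1).symm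
  | succ n ih =>
    have := newton (n + 2)
    rw [degreeSum_rootWeight_add_two ψ χ hχ, Finset.Nat.sum_antidiagonal_succ',
      Finset.Nat.sum_antidiagonal_succ', h0, h1, ih] at this
    simp only [degreeSum_rootWeight_add_two ψ χ hχ, mul_zero, Finset.sum_const_zero] at this
    linear_combination -this

end RootWeight

section HasseDavenport

open Polynomial UniqueFactorizationMonoid
open scoped IntermediateField

variable {F R : Type*} (E : Type*) [Field F] [Field E] [Algebra F E] [CommRing R]

/-- The lift `ψ ∘ N_{E/F}` of a multiplicative character of `F` to a finite extension `E`. -/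
noncomputable def normLift [FiniteDimensional F E] (ψ : MulChar F R) : MulChar E R where
  toMonoidHom := ψ.toMonoidHom.comp (Algebra.norm F)
  map_nonunit' x hx := by
    have hx : x = 0 := by simpa using hx
    simpa [hx] using ψ.map_nonunit not_isUnit_zero

/-- The lift `χ ∘ Tr_{E/F}` of an additive character of `F` to an extension `E`. -/
noncomputable def traceLift (χ : AddChar F R) : AddChar E R :=
  χ.compAddMonoidHom (Algebra.trace F E).toAddMonoidHom

variable {E}

theorem normLift_apply [FiniteDimensional F E] (ψ : MulChar F R) (x : E) :
    normLift E ψ x = ψ (Algebra.norm F x) :=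
  rfl

theorem traceLift_apply (χ : AddChar F R) (x : E) : traceLift E χ x = χ (Algebra.trace F E x) :=
  rfl

variable (F) in
/-- The characteristic polynomial over `F` of multiplication by `x ∈ E`, as a power of the minimal
polynomial of `x`. -/
noncomputable def fieldCharpoly (x : E) : F[X] :=
  minpoly F x ^ Module.finrank F⟮x⟯ E

theorem monic_fieldCharpoly [FiniteDimensional F E] (x : E) : (fieldCharpoly F x).Monic :=
  (minpoly.monic (Algebra.IsIntegral.isIntegral x)).pow _

theorem natDegree_fieldCharpoly [FiniteDimensional F E] (x : E) :
    (fieldCharpoly F x).natDegree = Module.finrank F E := by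
  rw [fieldCharpoly, natDegree_pow,
    ← IntermediateField.adjoin.finrank (Algebra.IsIntegral.isIntegral x), mul_comm,
    Module.finrank_mul_finrank]

theorem rootWeight_fieldCharpoly [FiniteDimensional F E] (ψ : MulChar F R) (χ : AddChar F R)
    (x : E) : rootWeight ψ χ (fieldCharpoly F x) = normLift E ψ x * traceLift E χ x := by
  have hx : IsIntegral F x := Algebra.IsIntegral.isIntegral x
  have norm_gen := Algebra.PowerBasis.norm_gen_eq_coeff_zero_minpoly
    (IntermediateField.adjoin.powerBasis hx)
  have trace_gen := PowerBasis.trace_gen_eq_nextCoeff_minpoly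
    (IntermediateField.adjoin.powerBasis hx)
  rw [IntermediateField.adjoin.powerBasis_gen, IntermediateField.minpoly_gen] at norm_gen trace_gen
  rw [IntermediateField.adjoin.powerBasis_dim] at norm_gen
  rw [fieldCharpoly, rootWeight_pow ψ χ (minpoly.monic hx), normLift_apply, traceLift_apply,
    Algebra.norm_eq_norm_adjoin F x, trace_eq_trace_adjoin F x, norm_gen, trace_gen, map_pow,
    AddChar.map_nsmul_eq_pow, ← mul_pow, rootWeight]

theorem splits_map_of_natDegree_dvd_finrank [Finite F] [Finite E] {P : F[X]}
    (hirr : Irreducible P) (hdeg : P.natDegree ∣ Module.finrank F E) :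
    (P.map (algebraMap F E)).Splits := by
  have := Fintype.ofFinite E
  have hdvd : P ∣ X ^ Fintype.card E - X := by
    rw [← Nat.card_eq_fintype_card, Module.natCard_eq_pow_finrank (K := F)]
    exact hirr.natDegree_dvd_iff_dvd_X_pow_card_pow_sub_X.mp hdeg
  refine (FiniteField.isSplittingField_sub E F).splits.of_dvd ?_ (map_dvd (algebraMap F E) hdvd)
  exact map_ne_zero (FiniteField.X_pow_card_sub_X_ne_zero F Fintype.one_lt_card)

theorem mem_rootSet_iff_minpoly_eq {P : F[X]} (hP : P.Monic)
    (hirr : Irreducible P) {x : E} : x ∈ P.rootSet E ↔ minpoly F x = P := by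
  rw [mem_rootSet]
  refine ⟨fun hx => (minpoly.eq_of_irreducible_of_monic hirr hx.2 hP).symm, ?_⟩
  rintro rfl
  exact ⟨hirr.ne_zero, minpoly.aeval F x⟩

open Classical in
theorem card_filter_minpoly_eq [Finite F] [Fintype E] {P : F[X]} (hP : P.Monic)
    (hirr : Irreducible P) (hdeg : P.natDegree ∣ Module.finrank F E) :
    Finset.card {x : E | minpoly F x = P} = P.natDegree := by
  rw [← card_rootSet_eq_natDegree (PerfectField.separable_of_irreducible hirr)
    (splits_map_of_natDegree_dvd_finrank (E := E) hirr hdeg), ← Set.toFinset_card]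
  congr 1
  ext x
  rw [Finset.mem_filter_univ, Set.mem_toFinset, mem_rootSet_iff_minpoly_eq hP hirr]

theorem fieldCharpoly_eq_pow_iff [FiniteDimensional F E] {P : F[X]} (hP : P.Monic)
    (hirr : Irreducible P) {k : ℕ} (hk : k ≠ 0) (hdeg : (P ^ k).natDegree = Module.finrank F E)
    {x : E} : fieldCharpoly F x = P ^ k ↔ minpoly F x = P := by
  classical
  have hx : IsIntegral F x := Algebra.IsIntegral.isIntegral x
  constructor
  · intro h
    rw [← radical_pow_of_monic_irreducible hP hirr hk, ← h, fieldCharpoly,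
      radical_pow_of_monic_irreducible (minpoly.monic hx) (minpoly.irreducible hx)
        Module.finrank_pos.ne']
  · rintro rfl
    rw [← natDegree_fieldCharpoly x, fieldCharpoly, natDegree_pow, natDegree_pow] at hdeg
    rw [fieldCharpoly, Nat.eq_of_mul_eq_mul_right (minpoly.natDegree_pos hx) hdeg]

theorem isPrimePow_fieldCharpoly [FiniteDimensional F E] (x : E) :
    IsPrimePow (fieldCharpoly F x) :=
  (minpoly.prime (Algebra.IsIntegral.isIntegral x)).isPrimePow.pow Module.finrank_pos.ne'

open Classical in
theorem card_filter_fieldCharpoly_eq [Finite F] [Fintype E] {g : F[X]}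
    (hg : g ∈ monicOfDegree F (Module.finrank F E)) :
    Finset.card {x : E | fieldCharpoly F x = g} = polyVonMangoldt g := by
  by_cases hpow : IsPrimePow g
  · obtain ⟨hmonic, hdeg⟩ := mem_monicOfDegree.mp hg
    obtain ⟨P, k, hP, hirr, hk, rfl⟩ := exists_monic_irreducible_pow_eq hmonic hpow
    simp only [fieldCharpoly_eq_pow_iff hP hirr hk hdeg]
    rw [polyVonMangoldt_pow hP hirr hk, card_filter_minpoly_eq hP hirr]
    exact hdeg ▸ natDegree_pow P k ▸ dvd_mul_left _ _
  · rw [polyVonMangoldt, if_neg hpow, Finset.card_eq_zero, Finset.filter_eq_empty_iff]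
    rintro x - rfl
    exact hpow (isPrimePow_fieldCharpoly x)

theorem gaussSum_normLift_traceLift [Fintype F] [Fintype E] [IsDomain R] (ψ : MulChar F R)
    {χ : AddChar F R} (hχ : χ ≠ 1) :
    gaussSum (normLift E ψ) (traceLift E χ) =
      (-1) ^ (Module.finrank F E - 1) * gaussSum ψ χ ^ Module.finrank F E := by
  classical
  calc gaussSum (normLift E ψ) (traceLift E χ)
      = ∑ x : E, rootWeight ψ χ (fieldCharpoly F x) := by
        simp only [gaussSum, rootWeight_fieldCharpoly]
    _ = ∑ g ∈ monicOfDegree F (Module.finrank F E), ∑ x : E with fieldCharpoly F x = g,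
          rootWeight ψ χ (fieldCharpoly F x) :=
        (Finset.sum_fiberwise_of_maps_to (fun x _ =>
          mem_monicOfDegree.mpr ⟨monic_fieldCharpoly x, natDegree_fieldCharpoly x⟩) _).symm
    _ = degreeSum (fun g => polyVonMangoldt g * rootWeight ψ χ g) (Module.finrank F E) := by
        refine Finset.sum_congr rfl fun g hg => ?_
        dsimp only
        rw [← card_filter_fieldCharpoly_eq (E := E) hg, ← nsmul_eq_mul, ← Finset.sum_const]
        exact Finset.sum_congr rfl fun x hx => by rw [(Finset.mem_filter.mp hx).2]
    _ = _ := by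
        obtain ⟨m, hm⟩ := Nat.exists_eq_add_one.mpr (Module.finrank_pos (R := F) (M := E))
        rw [hm, degreeSum_polyVonMangoldt_mul_rootWeight ψ χ hχ, Nat.add_sub_cancel]

end HasseDavenport

section MulCharKernel

variable {F M : Type*} [Field F] [CommMonoidWithZero M]

theorem mulChar_apply_eq_one_iff_exists_pow [Finite F] (φ : MulChar F M) (s : Fˣ) :
    φ s = 1 ↔ ∃ t : Fˣ, t ^ orderOf φ = s := by
  constructor
  · intro hs
    obtain ⟨g, hg⟩ := IsCyclic.exists_generator (α := Fˣ)
    obtain ⟨i, rfl⟩ := mem_powers_iff_mem_zpowers.mpr (hg s)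
    dsimp only at hs
    have hφi : φ ^ i = 1 := by
      rw [MulChar.eq_iff hg, MulChar.pow_apply_coe, MulChar.one_apply_coe,
        ← map_pow, ← Units.val_pow_eq_pow_val, hs]
    obtain ⟨j, rfl⟩ := orderOf_dvd_of_pow_eq_one hφi
    exact ⟨g ^ j, by rw [← pow_mul, mul_comm]⟩
  · rintro ⟨t, rfl⟩
    rw [Units.val_pow_eq_pow_val, map_pow, ← MulChar.pow_apply_coe, pow_orderOf_eq_one,
      MulChar.one_apply_coe]

variable {K : Type*} [Field K] [Algebra K F]

theorem mulChar_apply_eq_one_iff_exists_algebraMap [Finite F] {φ : MulChar F M}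
    (hφ : orderOf φ = (Nat.card F - 1) / (Nat.card K - 1)) (s : Fˣ) :
    φ s = 1 ↔ ∃ y : Kˣ, algebraMap K F y = s := by
  have := Finite.of_injective _ (algebraMap K F).injective
  rw [mulChar_apply_eq_one_iff_exists_pow, hφ]
  constructor
  · rintro ⟨t, rfl⟩
    refine ⟨Units.map (Algebra.norm K) t, ?_⟩
    rw [Units.coe_map, Units.val_pow_eq_pow_val]
    exact FiniteField.algebraMap_norm_eq_pow
  · rintro ⟨y, hy⟩
    obtain ⟨t, rfl⟩ := FiniteField.unitsMap_norm_surjective K F y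
    refine ⟨t, Units.ext ?_⟩
    rw [Units.val_pow_eq_pow_val, ← FiniteField.algebraMap_norm_eq_pow, ← hy, Units.coe_map]

variable {R : Type*} [CommRing R] [IsDomain R]

theorem sum_range_orderOf_mulChar_pow_apply (φ : MulChar F R) {s : F} (hs : IsUnit s)
    [Decidable (φ s = 1)] :
    ∑ j ∈ Finset.range (orderOf φ), (φ ^ j) s = if φ s = 1 then (orderOf φ : R) else 0 := by
  lift s to Fˣ using hs
  simp_rw [MulChar.pow_apply_coe]
  split_ifs with h
  · simp [h]
  · have geom := geom_sum_mul (φ s) (orderOf φ)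
    rw [← MulChar.pow_apply_coe, pow_orderOf_eq_one, MulChar.one_apply_coe, sub_self] at geom
    exact (mul_eq_zero.mp geom).resolve_right (sub_ne_zero.mpr h)

theorem orderOf_mul_sum_units [Fintype F] [Fintype Kˣ] {φ : MulChar F R}
    (hφ : orderOf φ = (Nat.card F - 1) / (Nat.card K - 1)) (h : F → R) :
    orderOf φ * ∑ y : Kˣ, h (algebraMap K F y) =
      ∑ j ∈ Finset.range (orderOf φ), ∑ s : F, (φ ^ j) s * h s := by
  classical
  have indicator (s : F) : ∑ j ∈ Finset.range (orderOf φ), (φ ^ j) s =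
      if ∃ y : Kˣ, algebraMap K F y = s then (orderOf φ : R) else 0 := by
    rcases eq_or_ne s 0 with rfl | hs
    · simp [MulChar.map_zero]
    · rw [sum_range_orderOf_mulChar_pow_apply φ hs.isUnit]
      lift s to Fˣ using hs.isUnit
      simp only [mulChar_apply_eq_one_iff_exists_algebraMap hφ]
  rw [Finset.sum_comm]
  simp_rw [← Finset.sum_mul, indicator, ite_mul, zero_mul]
  rw [← Finset.sum_filter, ← Finset.mul_sum]
  congr 1
  refine Finset.sum_bij (fun y _ => algebraMap K F y) ?_ ?_ ?_ fun _ _ => rfl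
  · simp
  · exact fun y _ z _ hyz => Units.ext ((algebraMap K F).injective hyz)
  · simp

end MulCharKernel

section OmegaSum

variable {F E R : Type*} (K : Type*) [Field K] [Fintype Kˣ] [Field F] [Algebra K F]
  [Field E] [Fintype E] [Algebra F E] [CommRing R]

/-- The exponential sum `Ω(c) = ∑_{x ∈ E} ∑_{y ∈ Kˣ} χ(y N_{E/F}(x)) χ(Tr_{E/F}(c x))`. -/
noncomputable def omegaSum (χ : AddChar F R) (c : E) : R :=
  ∑ x : E, ∑ y : Kˣ, χ (algebraMap K F y * Algebra.norm F x) * traceLift E χ (c * x)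

variable {K} [Algebra K E] [IsScalarTower K F E]

theorem omegaSum_mul_algebraMap (χ : AddChar F R) (c : E) (z : Kˣ) :
    omegaSum K χ (c * algebraMap K E z) = omegaSum K χ c := by
  have hz : algebraMap K E z ≠ 0 := by simp
  refine Fintype.sum_equiv (Equiv.mulLeft₀ _ hz) _ _ fun x =>
    (Fintype.sum_equiv (Equiv.mulRight (z ^ Module.finrank F E)) _ _ fun y => ?_).symm
  have norm_z : Algebra.norm F (algebraMap K E z) = algebraMap K F z ^ Module.finrank F E := by
    rw [IsScalarTower.algebraMap_apply K F E, Algebra.norm_algebraMap]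
  simp only [Equiv.mulLeft₀_apply, Equiv.coe_mulRight, Units.val_mul, Units.val_pow_eq_pow_val,
    map_mul, map_pow, norm_z, mul_assoc]

theorem sum_omegaSum_mul_algebraMap (χ : AddChar F R) (c : E) :
    ∑ z : Kˣ, omegaSum K χ (c * algebraMap K E z) = Fintype.card Kˣ * omegaSum K χ c := by
  simp only [omegaSum_mul_algebraMap, Finset.sum_const, Finset.card_univ, nsmul_eq_mul]

end OmegaSum

section NormTraceSums

variable {F E R : Type*} [Field F] [Fintype F] [Field E] [Fintype E] [Algebra F E]
  [CommRing R] [IsDomain R]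

theorem gaussSum_inv_mul_gaussSum {ψ : MulChar F R} (hψ : ψ ≠ 1) {χ : AddChar F R} (hχ : χ ≠ 1) :
    gaussSum ψ⁻¹ χ * gaussSum ψ χ = ψ (-1) * Fintype.card F := by
  rw [← gaussSum_mul_gaussSum_eq_card hψ (AddChar.IsPrimitive.of_ne_one hχ),
    ← mul_gaussSum_inv_eq_gaussSum ψ⁻¹ χ, MulChar.inv_apply', inv_neg_one]
  ring

theorem sum_normLift_mul_traceLift_mul (ψ : MulChar F R) {χ : AddChar F R} (hχ : χ ≠ 1) {c : E}
    (hc : c ≠ 0) :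
    ∑ x : E, normLift E ψ x * traceLift E χ (c * x) =
      (-1) ^ (Module.finrank F E - 1) * gaussSum ψ χ ^ Module.finrank F E *
        ψ⁻¹ (Algebra.norm F c) := by
  rw [← gaussSum_normLift_traceLift ψ hχ, mul_comm (gaussSum _ _)]
  have norm_inv : Algebra.norm F c⁻¹ = (Algebra.norm F c)⁻¹ :=
    eq_inv_of_mul_eq_one_left (by rw [← map_mul, inv_mul_cancel₀ hc, map_one])
  have shift := gaussSum_mulShift_eq (normLift E ψ) (traceLift E χ) (Units.mk0 c hc)
  rwa [MulChar.inv_apply', Units.val_mk0, normLift_apply, norm_inv, ← MulChar.inv_apply'] at shift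

theorem gaussSum_inv_mul_sum_normLift_mul_traceLift_mul {ψ : MulChar F R} (hψ : ψ ≠ 1)
    {χ : AddChar F R} (hχ : χ ≠ 1) {c : E} (hc : c ≠ 0) :
    gaussSum ψ⁻¹ χ * ∑ x : E, normLift E ψ x * traceLift E χ (c * x) =
      Fintype.card F * (-1) ^ (Module.finrank F E - 1) *
        (ψ (-1) * gaussSum ψ χ ^ (Module.finrank F E - 1) * ψ⁻¹ (Algebra.norm F c)) := by
  rw [sum_normLift_mul_traceLift_mul _ hχ hc,
    ← mul_pow_sub_one Module.finrank_pos.ne' (gaussSum ψ χ)]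
  linear_combination (-1) ^ (Module.finrank F E - 1) *
    gaussSum ψ χ ^ (Module.finrank F E - 1) * ψ⁻¹ (Algebra.norm F c) *
      gaussSum_inv_mul_gaussSum hψ hχ

theorem gaussSum_one_mul_sum_normLift_one_mul_traceLift_mul {χ : AddChar F R} (hχ : χ ≠ 1) {c : E}
    (hc : c ≠ 0) :
    gaussSum 1 χ * ∑ x : E, normLift E (1 : MulChar F R) x * traceLift E χ (c * x) = 1 := by
  rw [sum_normLift_mul_traceLift_mul _ hχ hc, gaussSum_one_left hχ, inv_one,
    MulChar.one_apply (Algebra.norm_ne_zero_iff.mpr hc).isUnit, mul_one, ← mul_assoc,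
    mul_pow_sub_one Module.finrank_pos.ne', ← mul_pow, neg_one_mul, neg_neg, one_pow]

variable {K : Type*} [Field K] [Fintype Kˣ] [Algebra K F]

theorem orderOf_mul_sum_units_addChar {φ : MulChar F R}
    (hφ : orderOf φ = (Nat.card F - 1) / (Nat.card K - 1)) (χ : AddChar F R) {u : F} (hu : u ≠ 0) :
    orderOf φ * ∑ y : Kˣ, χ (algebraMap K F y * u) =
      ∑ j ∈ Finset.range (orderOf φ), gaussSum (φ ^ j)⁻¹ χ * (φ ^ j) u := by
  have expand := orderOf_mul_sum_units (K := K) (φ := φ⁻¹) (by rwa [orderOf_inv])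
    (fun s => χ (s * u))
  rw [orderOf_inv] at expand
  rw [expand]
  refine Finset.sum_congr rfl fun j _ => ?_
  have shift := gaussSum_mulShift_eq (φ ^ j)⁻¹ χ (Units.mk0 u hu)
  rw [inv_inv, Units.val_mk0] at shift
  rw [mul_comm, ← shift, inv_pow]
  simp only [gaussSum, AddChar.mulShift_apply, mul_comm u]

theorem orderOf_mul_omegaSum_eq_sum_gaussSum {φ : MulChar F R}
    (hφ : orderOf φ = (Nat.card F - 1) / (Nat.card K - 1)) (χ : AddChar F R) (c : E) :
    orderOf φ * omegaSum K χ c = orderOf φ * Fintype.card Kˣ +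
      ∑ j ∈ Finset.range (orderOf φ), gaussSum (φ ^ j)⁻¹ χ *
        ∑ x : E, normLift E (φ ^ j) x * traceLift E χ (c * x) := by
  classical
  have inner (x : E) : orderOf φ * ∑ y : Kˣ, χ (algebraMap K F y * Algebra.norm F x) =
      (if x = 0 then (orderOf φ * Fintype.card Kˣ : R) else 0) +
        ∑ j ∈ Finset.range (orderOf φ), gaussSum (φ ^ j)⁻¹ χ * normLift E (φ ^ j) x := by
    split_ifs with hx
    · simp [hx, MulChar.map_zero]
    · rw [zero_add, orderOf_mul_sum_units_addChar hφ χ (Algebra.norm_ne_zero_iff.mpr hx)]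
      rfl
  calc orderOf φ * omegaSum K χ c
      = ∑ x : E, orderOf φ * (∑ y : Kˣ, χ (algebraMap K F y * Algebra.norm F x)) *
          traceLift E χ (c * x) := by
        simp only [omegaSum, Finset.mul_sum, Finset.sum_mul, mul_assoc]
    _ = orderOf φ * Fintype.card Kˣ + ∑ x : E, ∑ j ∈ Finset.range (orderOf φ),
          gaussSum (φ ^ j)⁻¹ χ * (normLift E (φ ^ j) x * traceLift E χ (c * x)) := by
        simp [inner, add_mul, Finset.sum_add_distrib, Finset.sum_mul, mul_assoc]
    _ = _ := by
        rw [Finset.sum_comm]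
        simp only [Finset.mul_sum]

theorem card_eq_div_mul_card_units_add_one :
    Fintype.card F = (Nat.card F - 1) / (Nat.card K - 1) * Fintype.card Kˣ + 1 := by
  have := Finite.of_injective _ (algebraMap K F).injective
  have hdvd : Nat.card K - 1 ∣ Nat.card F - 1 := by
    rw [Module.natCard_eq_pow_finrank (K := K) (V := F)]
    exact Nat.sub_one_dvd_pow_sub_one _ _
  rw [← Nat.card_eq_fintype_card (α := Kˣ), Nat.card_units, Nat.div_mul_cancel hdvd,
    Nat.sub_add_cancel Nat.card_pos, Nat.card_eq_fintype_card]

theorem orderOf_mul_omegaSum {φ : MulChar F R}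
    (hφ : orderOf φ = (Nat.card F - 1) / (Nat.card K - 1)) {χ : AddChar F R} (hχ : χ ≠ 1) {c : E}
    (hc : c ≠ 0) :
    orderOf φ * omegaSum K χ c = Fintype.card F * (1 + (-1) ^ (Module.finrank F E - 1) *
      ∑ j ∈ Finset.Icc 1 (orderOf φ - 1), (φ ^ j) (-1) *
        gaussSum (φ ^ j) χ ^ (Module.finrank F E - 1) * (φ ^ j)⁻¹ (Algebra.norm F c)) := by
  have hN : 0 < orderOf φ := orderOf_pos φ
  have card_F : (orderOf φ * Fintype.card Kˣ + 1 : R) = Fintype.card F := by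
    rw [card_eq_div_mul_card_units_add_one (F := F) (K := K), ← hφ]
    push_cast
    rfl
  have range_eq : Finset.range (orderOf φ) = insert 0 (Finset.Icc 1 (orderOf φ - 1)) := by
    ext j
    simp only [Finset.mem_range, Finset.mem_insert, Finset.mem_Icc]
    omega
  rw [orderOf_mul_omegaSum_eq_sum_gaussSum hφ, range_eq, Finset.sum_insert (by simp), pow_zero,
    inv_one, gaussSum_one_mul_sum_normLift_one_mul_traceLift_mul hχ hc, ← add_assoc, card_F,
    mul_add, mul_one, ← mul_assoc, Finset.mul_sum]
  congr 1
  refine Finset.sum_congr rfl fun j hj => ?_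
  rw [Finset.mem_Icc] at hj
  have hj_ne : φ ^ j ≠ 1 := pow_ne_one_of_lt_orderOf (by omega) (by omega)
  exact gaussSum_inv_mul_sum_normLift_mul_traceLift_mul hj_ne hχ hc

end NormTraceSums

theorem finrank_eq_div_of_card_eq_pow {F E : Type*} [Field F] [Field E] [Fintype F] [Fintype E]
    [Algebra F E] {q f k : ℕ} (hq : 1 < q) (hF : Fintype.card F = q ^ f)
    (hE : Fintype.card E = q ^ k) : Module.finrank F E = k / f := by
  have hf : f ≠ 0 := by
    rintro rfl
    exact hF.not_gt Fintype.one_lt_card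
  have card_eq := Module.card_eq_pow_finrank (K := F) (V := E)
  rw [hE, hF, ← pow_mul] at card_eq
  rw [Nat.pow_right_injective hq card_eq, Nat.mul_div_cancel_left _ (Nat.pos_of_ne_zero hf)]

section CanonicalCharacters

variable {p : ℕ} {F E : Type*} [Field F] [Field E] [Algebra (ZMod p) F] [Algebra (ZMod p) E]

variable (p) in
/-- `χ` is the canonical additive character `x ↦ exp(2πi Tr(x)/p)` of a field of characteristic
`p`, where the trace in `ZMod p` is represented by an integer in `[0, p)`. -/
def IsCanonicalAddChar (χ : AddChar F ℂ) : Prop :=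
  ∀ x : F, χ x =
    Complex.exp (2 * Real.pi * Complex.I * ((Algebra.trace (ZMod p) F x).val : ℂ) / p)

variable [Fact p.Prime]

theorem IsCanonicalAddChar.ne_one [Finite F] {χ : AddChar F ℂ} (hχ : IsCanonicalAddChar p χ) :
    χ ≠ 1 := by
  obtain ⟨x, hx⟩ := Algebra.trace_surjective (ZMod p) F 1
  have hp : 1 < p := (Fact.out : p.Prime).one_lt
  have := Fact.mk hp
  rintro rfl
  refine (Complex.isPrimitiveRoot_exp p (by omega)).ne_one hp ?_
  have value := hχ x
  rw [hx, ZMod.val_one, AddChar.one_apply, Nat.cast_one, mul_one] at value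
  exact value.symm

theorem IsCanonicalAddChar.eq_traceLift [Finite E] [Algebra F E] {χ₁ : AddChar F ℂ}
    (hχ₁ : IsCanonicalAddChar p χ₁) {χ₂ : AddChar E ℂ} (hχ₂ : IsCanonicalAddChar p χ₂) :
    χ₂ = traceLift E χ₁ := by
  have := Finite.of_injective _ (algebraMap F E).injective
  have : IsScalarTower (ZMod p) F E := .of_algebraMap_eq' (Subsingleton.elim _ _)
  ext x
  rw [traceLift_apply, hχ₁, hχ₂, Algebra.trace_trace]

end CanonicalCharacters

theorem stmt3_general {K F E : Type*} [Field K] [Field F] [Field E] [Fintype K] [Fintype F]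
    [Fintype E] [DecidableEq K] [Algebra K F] [Algebra F E] [Algebra K E] [IsScalarTower K F E]
    {q f k : ℕ} (hcq : Fintype.card K = q) (hcf : Fintype.card F = q ^ f)
    (hck : Fintype.card E = q ^ k) {χ : AddChar F ℂ} (hχ : χ ≠ 1) {φ : MulChar F ℂ}
    (hφ : orderOf φ = (q ^ f - 1) / (q - 1)) {b : E} (hb : b ≠ 0) :
    ∑ z : Kˣ, omegaSum K χ (b * algebraMap K E z)
      = (q : ℂ) ^ f * ((q : ℂ) - 1) ^ 2 / ((q : ℂ) ^ f - 1) +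
        (-1 : ℂ) ^ (k / f - 1) * (q : ℂ) ^ f * ((q : ℂ) - 1) ^ 2 / ((q : ℂ) ^ f - 1) *
          ∑ j ∈ Finset.Icc 1 ((q ^ f - 1) / (q - 1) - 1),
            (φ ^ j) (-1) * gaussSum (φ ^ j) χ ^ (k / f - 1) *
              (starRingEnd ℂ) ((φ ^ j) (Algebra.norm F b)) := by
  have hq : 1 < q := hcq ▸ Fintype.one_lt_card
  have hφ' : orderOf φ = (Nat.card F - 1) / (Nat.card K - 1) := by
    rw [Nat.card_eq_fintype_card, Nat.card_eq_fintype_card, hcf, hcq, hφ]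
  have card_units : (Fintype.card Kˣ : ℂ) = q - 1 := by
    rw [Fintype.card_units, hcq, Nat.cast_sub hq.le, Nat.cast_one]
  have card_F : (q : ℂ) ^ f = orderOf φ * (q - 1) + 1 := by
    rw [← card_units, hφ', ← Nat.cast_pow, ← hcf,
      card_eq_div_mul_card_units_add_one (F := F) (K := K)]
    push_cast
    rfl
  have hN : (orderOf φ : ℂ) ≠ 0 := Nat.cast_ne_zero.mpr (orderOf_pos φ).ne'
  have hq' : (q : ℂ) - 1 ≠ 0 := sub_ne_zero.mpr (Nat.cast_ne_one.mpr hq.ne')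
  have omega_eq := orderOf_mul_omegaSum hφ' hχ hb
  rw [finrank_eq_div_of_card_eq_pow hq hcf hck, hcf, Nat.cast_pow] at omega_eq
  simp only [sum_omegaSum_mul_algebraMap, starRingEnd_apply, MulChar.star_apply', card_units, ← hφ]
  rw [show (q : ℂ) ^ f - 1 = orderOf φ * (q - 1) by rw [card_F, add_sub_cancel_right]]
  field_simp
  linear_combination omega_eq

/-- **Lemma 5.** Let `q` be a power of a prime `p`, `f ∣ k`, `f > 1`.
With `χ₁, χ₂` the canonical additive characters of `F_{q^f}`, `F_{q^k}`,
`Ω(b) = ∑_{x ∈ F_{q^k}} ∑_{y ∈ F_qˣ} χ₁(y x^{(q^k-1)/(q^f-1)}) χ₂(bx)` and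
`Δ(b) = ∑_{z ∈ F_qˣ} Ω(bz)`, and `φ` a multiplicative character of `F_{q^f}ˣ` of order
`(q^f-1)/(q-1)`, for every `b ∈ F_{q^k}ˣ` we have
`Δ(b) = q^f(q-1)²/(q^f-1) + ((-1)^{k/f-1} q^f(q-1)²/(q^f-1)) ·
  ∑_{j=1}^{(q^f-1)/(q-1)-1} φ^j(-1) G(φ^j,χ₁)^{k/f-1} conj(φ^j)(b^{(q^k-1)/(q^f-1)})`.
Here `x^{(q^k-1)/(q^f-1)}` is the norm from `Fk` to `Ff` (hypothesis `hnorm`). -/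
theorem stmt3 (p e q f k : ℕ) [Fact p.Prime] (he : 0 < e) (hq : q = p ^ e)
    (hf : 1 < f) (hfk : f ∣ k)
    (Fq Ff Fk : Type) [Field Fq] [Field Ff] [Field Fk]
    [Fintype Fq] [Fintype Ff] [Fintype Fk] [DecidableEq Fq]
    [Algebra Fq Ff] [Algebra Ff Fk] [Algebra Fq Fk] [IsScalarTower Fq Ff Fk]
    [Algebra (ZMod p) Ff] [Algebra (ZMod p) Fk]
    (hcq : Fintype.card Fq = q) (hcf : Fintype.card Ff = q ^ f)
    (hck : Fintype.card Fk = q ^ k)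
    (hnorm : ∀ x : Fk,
      algebraMap Ff Fk (Algebra.norm Ff x) = x ^ ((q ^ k - 1) / (q ^ f - 1)))
    (χ₁ : AddChar Ff ℂ)
    (hχ₁ : ∀ x : Ff, χ₁ x =
      Complex.exp (2 * Real.pi * Complex.I * ((Algebra.trace (ZMod p) Ff x).val : ℂ) / p))
    (χ₂ : AddChar Fk ℂ)
    (hχ₂ : ∀ x : Fk, χ₂ x =
      Complex.exp (2 * Real.pi * Complex.I * ((Algebra.trace (ZMod p) Fk x).val : ℂ) / p))
    (φ : MulChar Ff ℂ) (hφ : orderOf φ = (q ^ f - 1) / (q - 1))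
    (b : Fk) (hb : b ≠ 0) :
    ∑ z : Fqˣ, ∑ x : Fk, ∑ y : Fqˣ,
        χ₁ (algebraMap Fq Ff (y : Fq) * Algebra.norm Ff x) *
          χ₂ (b * algebraMap Fq Fk (z : Fq) * x)
      = (q : ℂ) ^ f * ((q : ℂ) - 1) ^ 2 / ((q : ℂ) ^ f - 1) +
        (-1 : ℂ) ^ (k / f - 1) * (q : ℂ) ^ f * ((q : ℂ) - 1) ^ 2 / ((q : ℂ) ^ f - 1) *
          ∑ j ∈ Finset.Icc 1 ((q ^ f - 1) / (q - 1) - 1),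
            (φ ^ j) (-1) * gaussSum (φ ^ j) χ₁ ^ (k / f - 1) *
              (starRingEnd ℂ) ((φ ^ j) (Algebra.norm Ff b)) := by
  obtain rfl := IsCanonicalAddChar.eq_traceLift (p := p) hχ₁ hχ₂
  exact stmt3_general hcq hcf hck (IsCanonicalAddChar.ne_one (p := p) hχ₁) hφ hb
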